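/- arXiv:0807.0339 — 2 statements merged into one kernel-verified Lean document; each statement's English description precedes it below -/
import Mathlib

section
/- Let g be a complex semisimple Lie algebra with an sl2-triple (e,h,f), and let g = ⊕_{i∈ℤ} g(i) be the ad h weight decomposition. Then the bilinear form on g(-1) given by (x,y) ↦ κ(e,[x,y]), where κ is the Killing form, is skew-symmetric and nondegenerate. -/
open LieModule Module in
lemma aux_nilp {L M : Type*} [LieRing L] [LieAlgebra ℂ L] [AddCommGroup M] [Module ℂ M]
    [LieRingModule L M] [LieModule ℂ L M] [Module.Finite ℂ M] {h e f : L}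
    (t : IsSl2Triple h e f) {m : M} {μ : ℂ} (hm : ⁅h, m⁆ = μ • m) :
    ∃ k : ℕ, ((toEnd ℂ L M e) ^ k) m = 0 := by
  by_contra! contra
  let evals (n : ℕ) : ℂ := μ + 2 * (n : ℂ)
  have h_inj : Function.Injective evals := fun a b hab ↦ by
    simpa [evals] using hab
  have aux (ν : Set.range evals) : (toEnd ℂ L M h).HasEigenvector ν
      (((toEnd ℂ L M e) ^ (ν.property.choose)) m) := by
    refine ⟨?_, contra _⟩
    rw [Module.End.mem_eigenspace_iff, toEnd_apply_apply]
    have h1 := ν.property.choose_spec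
    exact (t.lie_h_pow_toEnd_e hm _).trans (congrArg (· • _) h1)
  have _i := ((toEnd ℂ L M h).eigenvectors_linearIndependent (Set.range evals) _ aux).finite
  exact (Set.infinite_range_of_injective h_inj) (Set.toFinite _)

open LieModule Module in
/-- top of an `e`-string -/
lemma aux_top {L M : Type*} [LieRing L] [LieAlgebra ℂ L] [AddCommGroup M] [Module ℂ M]
    [LieRingModule L M] [LieModule ℂ L M] [Module.Finite ℂ M] {h e f : L}
    (t : IsSl2Triple h e f) {m : M} {μ : ℂ} (hm : ⁅h, m⁆ = μ • m) (h0 : m ≠ 0) :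
    ∃ k : ℕ, ((toEnd ℂ L M e) ^ (k + 1)) m = 0 ∧
      t.HasPrimitiveVectorWith (((toEnd ℂ L M e) ^ k) m) (μ + 2 * k) := by
  obtain ⟨k, hk, hk'⟩ := Nat.exists_not_and_succ_of_not_zero_of_exists
    (p := fun k => ((toEnd ℂ L M e) ^ k) m = 0) (by simpa using h0) (aux_nilp t hm)
  refine ⟨k, hk', hk, t.lie_h_pow_toEnd_e hm k, ?_⟩
  rw [IsSl2Triple.lie_e_pow_toEnd_e]; exact hk'

open LieModule Module in
/-- no Jordan blocks on `ker e` -/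
lemma aux_ker {L M : Type*} [LieRing L] [LieAlgebra ℂ L] [AddCommGroup M] [Module ℂ M]
    [LieRingModule L M] [LieModule ℂ L M] [Module.Finite ℂ M] {h e f : L}
    (t : IsSl2Triple h e f) {p q : M} {μ : ℂ} (hp : ⁅h, p⁆ = μ • p + q) (hep : ⁅e, p⁆ = 0)
    (P : t.HasPrimitiveVectorWith q μ) : False := by
  obtain ⟨n, rfl⟩ := P.exists_nat
  have hF : ∀ (k : ℕ) (x : M), ⁅f, ((toEnd ℂ L M f) ^ k) x⁆ = ((toEnd ℂ L M f) ^ (k+1)) x := by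
    intro k x; simp [pow_succ']
  have hh : ∀ k : ℕ, ⁅h, ((toEnd ℂ L M f) ^ k) p⁆ =
      ((n : ℂ) - 2 * k) • ((toEnd ℂ L M f) ^ k) p + ((toEnd ℂ L M f) ^ k) q := by
    intro k
    induction k with
    | zero => simpa using hp
    | succ k ih =>
      rw [← hF, ← hF, leibniz_lie h, t.lie_lie_smul_f ℂ, ih, neg_lie, smul_lie, lie_add, lie_smul]
      push_cast
      module
  have he : ∀ k : ℕ, ⁅e, ((toEnd ℂ L M f) ^ (k + 1)) p⁆ =
      (((k : ℂ) + 1) * (n - k)) • ((toEnd ℂ L M f) ^ k) p +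
        ((k : ℂ) + 1) • ((toEnd ℂ L M f) ^ k) q := by
    intro k
    induction k with
    | zero =>
      rw [← hF, leibniz_lie e, t.lie_e_f, hh]
      simp [hep]
    | succ k ih =>
      rw [← hF, leibniz_lie e, t.lie_e_f, ih, hh, lie_add, lie_smul, lie_smul, hF, hF]
      push_cast
      module
  have hq0 := P.pow_toEnd_f_eq_zero_of_eq_nat rfl
  have hq1 := P.pow_toEnd_f_ne_zero_of_eq_nat rfl le_rfl
  have hqz : ∀ m : ℕ, ((toEnd ℂ L M f) ^ (n + 1 + m)) q = 0 := by
    intro m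
    rw [add_comm, pow_add, Module.End.mul_apply, hq0, map_zero]
  have key : ∀ m : ℕ, ((toEnd ℂ L M f) ^ (n + 1 + m)) p ≠ 0 := by
    intro m
    induction m with
    | zero =>
      intro h0
      have := he n
      rw [add_zero] at h0
      rw [h0, lie_zero, sub_self, mul_zero, zero_smul, zero_add, eq_comm, smul_eq_zero] at this
      exact this.elim (Nat.cast_add_one_ne_zero n) hq1
    | succ m ih =>
      intro h0
      have := he (n + 1 + m)
      rw [← add_assoc] at h0
      rw [h0, lie_zero, hqz, smul_zero, add_zero, eq_comm, smul_eq_zero] at this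
      refine this.elim (fun h1 => ?_) ih
      rcases mul_eq_zero.mp h1 with h1 | h1
      · exact Nat.cast_add_one_ne_zero _ h1
      · push_cast at h1
        have : (m : ℂ) + 1 = 0 := by linear_combination -h1
        exact Nat.cast_add_one_ne_zero _ this
  have h1 := hh (n + 1)
  rw [hq0, add_zero] at h1
  obtain ⟨k, hk⟩ := aux_nilp t.symm (m := ((toEnd ℂ L M f) ^ (n + 1)) p)
    (μ := -((n : ℂ) - 2 * (n + 1 : ℕ))) (by rw [neg_lie, h1, neg_smul])
  apply key k
  rw [add_comm, pow_add, Module.End.mul_apply, hk]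

open LieModule Module in
lemma aux_ss {L M : Type*} [LieRing L] [LieAlgebra ℂ L] [AddCommGroup M] [Module ℂ M]
    [LieRingModule L M] [LieModule ℂ L M] [Module.Finite ℂ M] {h e f : L}
    (t : IsSl2Triple h e f) (v : M)
    (hv : v ∈ (toEnd ℂ L M h).genEigenspace (-1) 2) :
    v ∈ (toEnd ℂ L M h).eigenspace (-1) := by
  set E := toEnd ℂ L M e with hE
  set F := toEnd ℂ L M f with hF
  set H := toEnd ℂ L M h with hH
  have hEF : E * F = F * E + H := by
    ext x
    simp only [hE, hF, hH, Module.End.mul_apply, LinearMap.add_apply, toEnd_apply_apply]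
    rw [leibniz_lie e f, t.lie_e_f, add_comm]
  have hHE : H * E = E * H + (2 : ℂ) • E := by
    ext x
    simp only [hE, hF, hH, Module.End.mul_apply, LinearMap.add_apply, toEnd_apply_apply,
      LinearMap.smul_apply]
    rw [leibniz_lie h e, t.lie_h_e_smul ℂ, smul_lie, add_comm]
  have hHF : H * F = F * H - (2 : ℂ) • F := by
    ext x
    simp only [hE, hF, hH, Module.End.mul_apply, LinearMap.sub_apply, toEnd_apply_apply,
      LinearMap.smul_apply]
    rw [leibniz_lie h f, t.lie_lie_smul_f ℂ, neg_lie, smul_lie]; abel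
  set C : Module.End ℂ M := F * E + (1/4 : ℂ) • (H * H) + (1/2 : ℂ) • H with hC
  have hCE : Commute C E := by
    have h1 : E * (F * E) = F * E * E + H * E := by rw [← mul_assoc, hEF, add_mul]
    have h2 : H * H * E = E * (H * H) + (4 : ℂ) • (H * E) - (4 : ℂ) • E := by
      rw [mul_assoc, hHE, mul_add, ← mul_assoc, hHE, add_mul, mul_smul_comm, hHE, smul_mul_assoc,
        mul_assoc]
      module
    change C * E = E * C
    rw [hC, add_mul, add_mul, mul_add, mul_add, h1, smul_mul_assoc, smul_mul_assoc, h2,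
      mul_smul_comm, mul_smul_comm, hHE]
    module
  have hCH : Commute C H := by
    have h1 : H * (F * E) = F * E * H := by
      rw [← mul_assoc, hHF, sub_mul, mul_assoc, hHE, mul_add, smul_mul_assoc, mul_smul_comm,
        mul_assoc]
      abel
    change C * H = H * C
    rw [hC, add_mul, add_mul, mul_add, mul_add, h1, smul_mul_assoc, smul_mul_assoc,
      mul_smul_comm, mul_smul_comm, mul_assoc H H H]
  -- Casimir eigenvalue
  have hcas : ∀ (c μ : ℂ) (m : M), t.HasPrimitiveVectorWith m μ → m ∈ C.genEigenspace c ⊤ →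
      c = μ * (μ + 2) / 4 := by
    intro c μ m P hm
    by_contra hne
    have h1 : m ∈ C.genEigenspace (μ * (μ + 2) / 4) ⊤ := by
      refine (C.genEigenspace _).mono (show (1 : ℕ∞) ≤ ⊤ from le_top) ?_
      change m ∈ C.eigenspace _
      rw [Module.End.mem_eigenspace_iff]
      have a1 : E m = 0 := P.lie_e
      have a2 : H m = μ • m := P.lie_h
      simp only [hC, LinearMap.add_apply, Module.End.mul_apply, LinearMap.smul_apply, a1, a2,
        map_zero, map_smul]
      module
    exact P.ne_zero ((Submodule.disjoint_def.mp (C.disjoint_genEigenspace hne ⊤ ⊤)) m hm h1)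
  have main : ∀ (c : ℂ) (v : M), v ∈ H.genEigenspace (-1) 2 → v ∈ C.genEigenspace c ⊤ →
      v ∈ H.eigenspace (-1) := by
    intro c v hv hvc
    have hstab : ∀ (k : ℕ) (x : M), x ∈ C.genEigenspace c ⊤ → (E ^ k) x ∈ C.genEigenspace c ⊤ :=
      fun k x hx => C.mapsTo_genEigenspace_of_comm (hCE.pow_right k) c ⊤ hx
    set u := H v + v with hu
    have huc : u ∈ C.genEigenspace c ⊤ :=
      add_mem (C.mapsTo_genEigenspace_of_comm hCH c ⊤ hvc) hvc
    have hHu : ⁅h, u⁆ = (-1 : ℂ) • u := by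
      have := (Module.End.mem_genEigenspace_nat (k := 2)).mp hv
      rw [LinearMap.mem_ker, pow_two, Module.End.mul_apply] at this
      have h2 : H u + u = 0 := by
        simpa [hu, add_assoc] using this
      change H u = _
      rw [neg_one_smul]; exact eq_neg_of_add_eq_zero_left h2
    rw [Module.End.mem_eigenspace_iff, neg_one_smul]
    apply eq_neg_of_add_eq_zero_left
    by_contra hu0
    obtain ⟨k, hk, Pk⟩ := aux_top t hHu hu0
    have hc1 := hcas c _ _ Pk (hstab k u huc)
    have hpw : ∀ j : ℕ, ⁅h, (E ^ j) v⁆ = (-1 + 2 * (j : ℂ)) • (E ^ j) v + (E ^ j) u := by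
      intro j
      induction j with
      | zero =>
        change H v = _
        simp [hu]
      | succ j ih =>
        rw [pow_succ', Module.End.mul_apply, Module.End.mul_apply]
        change H (E _) = _
        have := LinearMap.congr_fun hHE ((E ^ j) v)
        rw [Module.End.mul_apply] at this
        rw [this, LinearMap.add_apply, Module.End.mul_apply]
        change E ⁅h, (E ^ j) v⁆ + _ = _
        rw [ih, map_add, map_smul, LinearMap.smul_apply]
        push_cast
        module
    have hz : (E ^ (k + 1)) v = 0 := by
      by_contra hw
      have h1 := hpw (k + 1)
      rw [hk, add_zero] at h1
      obtain ⟨j, -, Pj⟩ := aux_top t h1 hw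
      have hc2 := hcas c _ _ Pj (hstab j _ (hstab (k + 1) v hvc))
      rw [hc1] at hc2
      obtain ⟨n, hn⟩ := Pk.exists_nat
      have h3 : (n : ℂ) * (n + 2) = (n + 2 + 2 * j) * (n + 2 + 2 * j + 2) := by
        rw [← hn]; push_cast at hc2; linear_combination 4 * hc2
      have h4 : n * (n + 2) = (n + 2 + 2 * j) * (n + 2 + 2 * j + 2) := by exact_mod_cast h3
      nlinarith
    refine aux_ker t (hpw k) ?_ Pk
    rw [pow_succ', Module.End.mul_apply] at hz
    exact hz
  have hdec := Submodule.inf_iSup_genEigenspace (p := H.genEigenspace (-1) 2)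
    (f := C) (fun x hx => H.mapsTo_genEigenspace_of_comm hCH.symm (-1) 2 hx) ⊤
  have htop : ⨆ μ, C.genEigenspace μ ⊤ = ⊤ := Module.End.iSup_maxGenEigenspace_eq_top C
  rw [htop, inf_top_eq] at hdec
  rw [hdec] at hv
  have : ⨆ μ, H.genEigenspace (-1) 2 ⊓ C.genEigenspace μ ⊤ ≤ H.eigenspace (-1) :=
    iSup_le fun μ x hx => main μ x hx.1 hx.2
  exact this hv

/-- Let `g` be a complex semisimple Lie algebra with an `sl₂`-triple
`(e, h, f)` and let `g(i)` denote the `ad h` weight space of weight `i`.  Then the bilinear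
form on `g(-1)` given by `(x, y) ↦ κ(e, ⁅x, y⁆)`, where `κ` is the Killing form, is
skew-symmetric and nondegenerate. -/
theorem stmt0 (L : Type*) [LieRing L] [LieAlgebra ℂ L] [Module.Finite ℂ L]
    [LieAlgebra.IsSemisimple ℂ L] (h e f : L) (ht : IsSl2Triple h e f) :
    (∀ x ∈ Module.End.eigenspace (LieAlgebra.ad ℂ L h) (-1 : ℂ),
      ∀ y ∈ Module.End.eigenspace (LieAlgebra.ad ℂ L h) (-1 : ℂ),
        killingForm ℂ L e ⁅x, y⁆ = - killingForm ℂ L e ⁅y, x⁆) ∧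
    (∀ x ∈ Module.End.eigenspace (LieAlgebra.ad ℂ L h) (-1 : ℂ),
      (∀ y ∈ Module.End.eigenspace (LieAlgebra.ad ℂ L h) (-1 : ℂ),
        killingForm ℂ L e ⁅x, y⁆ = 0) → x = 0) := by
  refine ⟨fun x _ y _ => by rw [← lie_skew x y, map_neg], fun x hx hxy => ?_⟩
  have hx' : ⁅h, x⁆ = (-1 : ℂ) • x := by
    simpa [Module.End.mem_eigenspace_iff] using hx
  by_contra hx0
  have hz : ⁅e, x⁆ = 0 := by
    have hz1 : ⁅h, ⁅e, x⁆⁆ = ⁅e, x⁆ := by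
      rw [leibniz_lie h e, ht.lie_h_e_smul ℂ, hx', smul_lie, lie_smul]
      module
    have hker : LinearMap.ker (killingForm ℂ L) = ⊥ :=
      LieAlgebra.IsKilling.ker_killingForm_eq_bot ℂ L
    suffices ⁅e, x⁆ ∈ LinearMap.ker (killingForm ℂ L) by simpa [hker] using this
    rw [LinearMap.mem_ker]
    set A : Module.End ℂ L := LieModule.toEnd ℂ L L h + 1 with hA
    have hdis : Disjoint (LinearMap.ker A) (LinearMap.range A) := by
      rw [Submodule.disjoint_def]
      rintro w hw ⟨v, rfl⟩
      have h1 := aux_ss ht v (by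
        rw [show (2 : ℕ∞) = ((2 : ℕ) : ℕ∞) from rfl, Module.End.mem_genEigenspace_nat,
          LinearMap.mem_ker, pow_two, Module.End.mul_apply]
        simpa [hA] using hw)
      rw [Module.End.mem_eigenspace_iff] at h1
      simp only [hA, LinearMap.add_apply, h1]
      simp
    have hsup : LinearMap.ker A ⊔ LinearMap.range A = ⊤ := by
      apply Submodule.eq_top_of_disjoint _ _ _ hdis
      rw [add_comm, LinearMap.finrank_range_add_finrank_ker]
    ext w
    have hw : w ∈ LinearMap.ker A ⊔ LinearMap.range A := hsup ▸ Submodule.mem_top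
    obtain ⟨y, hy, _, ⟨v, rfl⟩, rfl⟩ := Submodule.mem_sup.mp hw
    have e1 : killingForm ℂ L ⁅e, x⁆ y = 0 := by
      have := LieModule.traceForm_apply_lie_apply ℂ L L e x y
      rw [this]
      apply hxy
      rw [Module.End.mem_eigenspace_iff, neg_one_smul]
      exact eq_neg_of_add_eq_zero_left (by simpa [hA] using hy)
    have e2 : killingForm ℂ L ⁅e, x⁆ (A v) = 0 := by
      have := LieModule.traceForm_apply_lie_apply' ℂ L L h ⁅e, x⁆ v
      rw [hz1] at this
      simp only [hA, LinearMap.add_apply, LieModule.toEnd_apply_apply, Module.End.one_apply, map_add]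
      change killingForm ℂ L _ _ = - killingForm ℂ L _ _ at this
      rw [this]; simp
    rw [map_add, e1, e2]; simp
  have P : ht.HasPrimitiveVectorWith x (-1 : ℂ) := ⟨hx0, hx', hz⟩
  obtain ⟨n, hn⟩ := P.exists_nat
  have : (n : ℂ) + 1 = 0 := by rw [← hn]; ring
  exact Nat.cast_add_one_ne_zero n this
end

section
/- Let g be a complex semisimple Lie algebra with sl2-triple (e,h,f) and m as above. For every x in the affine subspace e + (m^⊥ under the Killing form identification), the composite linear map g → m*, a ↦ (the restriction to m of κ(·,[a,x])), is surjective. In other words, every adjoint orbit meets e + m^⊥ transversely. -/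
namespace Stmt5Aux

open LieModule Module

variable {L : Type*} [LieRing L] [LieAlgebra ℂ L] [Module.Finite ℂ L] {h e f : L}

lemma exists_zero (h : L) (v : ℕ → L) (a b : ℂ) (hb : b ≠ 0)
    (hv : ∀ n, ⁅h, v n⁆ = (a + b * n) • v n) : ∃ n, v n = 0 := by
  by_contra! contra
  let evals (n : ℕ) : ℂ := a + b * n
  have h_inj : Function.Injective evals := fun x y hxy ↦ by
    simpa [evals, hb] using hxy
  have aux (μ : Set.range evals) :
      (toEnd ℂ L L h).HasEigenvector μ (v μ.property.choose) := by
    set n := μ.property.choose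
    refine ⟨?_, contra n⟩
    rw [Module.End.mem_eigenspace_iff, toEnd_apply_apply, ← μ.property.choose_spec]
    exact hv n
  have _i := ((toEnd ℂ L L h).eigenvectors_linearIndependent (Set.range evals) _ aux).finite
  exact (Set.infinite_range_of_injective h_inj) (Set.toFinite _)

lemma primitive_ss (ht : IsSl2Triple h e f) (k : ℂ) (u u' : L) (hu : ⁅h, u⁆ = k • u + u')
    (hu' : ⁅h, u'⁆ = k • u') (he : ⁅e, u⁆ = 0) : u' = 0 := by
  by_contra hne
  have he' : ⁅e, u'⁆ = 0 := by
    have h1 : u' = ⁅h, u⁆ - k • u := by rw [hu]; abel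
    rw [h1, lie_sub, lie_smul, he, leibniz_lie, he, lie_zero, ← lie_skew e h, ht.lie_h_e_smul ℂ]
    simp [he]
  have P : ht.HasPrimitiveVectorWith u' k := ⟨hne, hu', he'⟩
  obtain ⟨n, rfl⟩ := P.exists_nat
  set ψ : ℕ → L := fun i ↦ ((toEnd ℂ L L f) ^ i) u with hψ
  set ψ' : ℕ → L := fun i ↦ ((toEnd ℂ L L f) ^ i) u' with hψ'
  have s (i) : ψ (i + 1) = ⁅f, ψ i⁆ := by simp [hψ, pow_succ']
  have s' (i) : ψ' (i + 1) = ⁅f, ψ' i⁆ := by simp [hψ', pow_succ']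
  have h1 (i : ℕ) : ⁅h, ψ i⁆ = ((n : ℂ) - 2 * i) • ψ i + ψ' i := by
    induction i with
    | zero => simpa [hψ, hψ'] using hu
    | succ i ih =>
      rw [s, s', leibniz_lie h, ht.lie_lie_smul_f ℂ, ih]
      simp only [lie_add, lie_smul, neg_lie, smul_lie]
      push_cast
      module
  have h2 (i : ℕ) : ⁅e, ψ (i + 1)⁆ = ((i + 1 : ℂ) * (n - i)) • ψ i + (i + 1 : ℂ) • ψ' i := by
    induction i with
    | zero =>
      have : ψ 0 = u := by simp [hψ]
      have h10 := h1 0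
      rw [s, leibniz_lie e, ht.lie_e_f, h10, this, he]
      simp
    | succ i ih =>
      rw [s (i + 1), leibniz_lie e, ht.lie_e_f, ih, h1]
      simp only [lie_add, lie_smul, ← s, ← s']
      push_cast
      module
  have z0 : ψ' (n + 1) = 0 := P.pow_toEnd_f_eq_zero_of_eq_nat rfl
  have z (i : ℕ) : ψ' (n + 1 + i) = 0 := by
    induction i with
    | zero => exact z0
    | succ i ih => rw [← add_assoc, s', ih, lie_zero]
  have nz : ψ' n ≠ 0 := P.pow_toEnd_f_ne_zero_of_eq_nat rfl le_rfl
  have N (i : ℕ) : ψ (n + 1 + i) ≠ 0 := by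
    induction i with
    | zero =>
      intro h0
      have := h2 n
      rw [add_zero] at h0
      rw [h0, lie_zero, sub_self, mul_zero, zero_smul, zero_add, eq_comm, smul_eq_zero] at this
      exact this.elim (Nat.cast_add_one_ne_zero n) nz
    | succ i ih =>
      intro h0
      have := h2 (n + 1 + i)
      rw [← add_assoc] at h0
      rw [h0, lie_zero, z, smul_zero, add_zero, eq_comm, smul_eq_zero] at this
      refine this.elim (fun h3 ↦ ?_) ih
      rcases mul_eq_zero.1 h3 with h4 | h4
      · exact Nat.cast_add_one_ne_zero _ h4
      · rw [sub_eq_zero] at h4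
        have := Nat.cast_injective h4
        omega
  obtain ⟨i, hi⟩ := exists_zero h (fun i ↦ ψ (n + 1 + i)) ((n : ℂ) - 2 * (n + 1)) (-2) (by norm_num)
    (fun i ↦ by
      rw [h1, z, add_zero]
      congr 1
      push_cast
      ring)
  exact N i hi

lemma ef_inj (ht : IsSl2Triple h e f) (k : ℕ) (hk : 1 ≤ k) (x : L) (hx : ⁅h, x⁆ = (k : ℂ) • x)
    (h0 : ⁅e, ⁅f, x⁆⁆ = 0) : x = 0 := by
  by_contra hne
  set φ : ℕ → L := fun i ↦ ((toEnd ℂ L L e) ^ i) x with hφ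
  have s (i) : φ (i + 1) = ⁅e, φ i⁆ := by simp [hφ, pow_succ']
  have hh (i : ℕ) : ⁅h, φ i⁆ = ((k : ℂ) + 2 * i) • φ i := ht.lie_h_pow_toEnd_e hx i
  have key (i : ℕ) : ∃ a : ℕ, 1 ≤ a ∧ ⁅f, ⁅e, φ i⁆⁆ = -((a : ℂ) • φ i) := by
    induction i with
    | zero =>
      refine ⟨k, hk, ?_⟩
      have : φ 0 = x := by simp [hφ]
      rw [this, leibniz_lie f, ← lie_skew f e, ht.lie_e_f, neg_lie, hx]
      rw [leibniz_lie e, ht.lie_e_f, hx] at h0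
      rw [leibniz_lie e, ht.lie_e_f, hx, h0, add_zero]
    | succ i ih =>
      obtain ⟨a, ha, ih⟩ := ih
      refine ⟨a + k + 2 * (i + 1), by omega, ?_⟩
      rw [leibniz_lie f, ← lie_skew f e, ht.lie_e_f, neg_lie, hh, s i, ih, lie_neg, lie_smul]
      push_cast
      module
  obtain ⟨i, hi⟩ := exists_zero h φ k 2 (by norm_num) hh
  obtain ⟨j, hj, hj'⟩ := Nat.exists_not_and_succ_of_not_zero_of_exists (p := fun i ↦ φ i = 0)
    (by simpa [hφ] using hne) ⟨i, hi⟩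
  obtain ⟨a, ha, h3⟩ := key j
  rw [← s, hj', lie_zero, eq_comm, neg_eq_zero, smul_eq_zero] at h3
  refine h3.elim (fun h4 ↦ ?_) hj
  have := Nat.cast_eq_zero.1 h4
  omega

lemma e_surj (ht : IsSl2Triple h e f) (k : ℕ) (hk : 1 ≤ k) (x : L) (hx : ⁅h, x⁆ = (k : ℂ) • x) :
    ∃ w, ⁅h, w⁆ = ((k : ℂ) - 2) • w ∧ ⁅e, w⁆ = x := by
  let G := Module.End.eigenspace (toEnd ℂ L L h) (k : ℂ)
  have hf (y : L) (hy : ⁅h, y⁆ = (k : ℂ) • y) : ⁅h, ⁅f, y⁆⁆ = ((k : ℂ) - 2) • ⁅f, y⁆ := by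
    rw [leibniz_lie h, ht.lie_lie_smul_f ℂ, hy]
    simp only [lie_smul, neg_lie, smul_lie]
    module
  let T := (toEnd ℂ L L e) ∘ₗ (toEnd ℂ L L f)
  have hT : ∀ y ∈ G, T y ∈ G := by
    intro y hy
    rw [Module.End.mem_eigenspace_iff] at hy ⊢
    change ⁅h, ⁅e, ⁅f, y⁆⁆⁆ = (k : ℂ) • ⁅e, ⁅f, y⁆⁆
    rw [leibniz_lie h, ht.lie_h_e_smul ℂ, hf y hy]
    simp only [lie_smul, smul_lie]
    module
  have inj : Function.Injective (T.restrict hT) := by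
    rw [injective_iff_map_eq_zero]
    rintro ⟨y, hy⟩ h0
    have h1 : ⁅e, ⁅f, y⁆⁆ = 0 := congrArg Subtype.val h0
    exact Subtype.ext (ef_inj ht k hk y (Module.End.mem_eigenspace_iff.1 hy) h1)
  obtain ⟨⟨y, hy⟩, h1⟩ := LinearMap.surjective_of_injective inj
    ⟨x, Module.End.mem_eigenspace_iff.2 hx⟩
  exact ⟨⁅f, y⁆, hf y (Module.End.mem_eigenspace_iff.1 hy), congrArg Subtype.val h1⟩

lemma exists_bound (h : L) : ∃ K : ℕ, ∀ k : ℕ, K ≤ k → ∀ s : ℂ, s = 1 ∨ s = -1 →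
    ∀ x : L, ⁅h, x⁆ = (s * k) • x → x = 0 := by
  have hfin : Set.Finite {μ : ℂ | (toEnd ℂ L L h).HasEigenvalue μ} :=
    Module.End.finite_hasEigenvalue _
  obtain ⟨C, hC⟩ := (hfin.image (fun μ ↦ ‖μ‖)).bddAbove
  obtain ⟨K, hK⟩ := exists_nat_gt C
  refine ⟨K, fun k hk s hs x hx ↦ ?_⟩
  by_contra hne
  have : (toEnd ℂ L L h).HasEigenvalue (s * k) :=
    Module.End.hasEigenvalue_of_hasEigenvector ⟨Module.End.mem_eigenspace_iff.2 hx, hne⟩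
  have h1 := hC ⟨_, this, rfl⟩
  have h2 : ‖s * (k : ℂ)‖ = k := by rcases hs with rfl | rfl <;> simp
  have h3 : (K : ℝ) ≤ k := by exact_mod_cast hk
  simp only [h2] at h1
  linarith

lemma ss (ht : IsSl2Triple h e f) (k : ℕ) (u u' : L) (hu : ⁅h, u⁆ = (k : ℂ) • u + u')
    (hu' : ⁅h, u'⁆ = (k : ℂ) • u') : u' = 0 := by
  obtain ⟨K, hK⟩ := exists_bound h
  obtain ⟨n, hn⟩ : ∃ n, K ≤ k + n := ⟨K, by omega⟩
  induction n generalizing k u u' with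
  | zero => exact hK k hn 1 (Or.inl rfl) u' (by simpa using hu')
  | succ n ih =>
    by_cases hn' : K ≤ k + n
    · exact ih k u u' hu hu' hn'
    have he (v v' : L) (hv : ⁅h, v⁆ = (k : ℂ) • v + v') :
        ⁅h, ⁅e, v⁆⁆ = ((k : ℂ) + 2) • ⁅e, v⁆ + ⁅e, v'⁆ := by
      rw [leibniz_lie h, ht.lie_h_e_smul ℂ, hv]
      simp only [lie_add, lie_smul, smul_lie]
      module
    -- one of the two steps
    have h1 : ⁅e, u'⁆ = 0 := by
      refine ih (k + 2) ⁅e, u⁆ ⁅e, u'⁆ ?_ ?_ (by omega)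
      · push_cast; exact he u u' hu
      · push_cast; simpa using he u' 0 (by simpa using hu')
    have h2 : ⁅h, ⁅e, u⁆⁆ = ((k + 2 : ℕ) : ℂ) • ⁅e, u⁆ := by
      push_cast; simpa [h1] using he u u' hu
    obtain ⟨w, hw, hew⟩ := e_surj ht (k + 2) (by omega) _ h2
    refine primitive_ss ht k (u - w) u' ?_ hu' ?_
    · push_cast at hw
      rw [lie_sub, hu, hw]
      module
    · rw [lie_sub, hew, sub_self]

lemma decomp (ht : IsSl2Triple h e f) (k : ℕ) (x : L) :
    ∃ v w, ⁅h, v⁆ = (k : ℂ) • v ∧ x = v + (⁅h, w⁆ - (k : ℂ) • w) := by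
  let T : L →ₗ[ℂ] L := toEnd ℂ L L h - (k : ℂ) • LinearMap.id
  have hT (y) : T y = ⁅h, y⁆ - (k : ℂ) • y := by simp [T]
  have hd : Disjoint (LinearMap.range T) (LinearMap.ker T) := by
    rw [Submodule.disjoint_def]
    rintro _ ⟨y, rfl⟩ hy
    rw [LinearMap.mem_ker, hT, sub_eq_zero] at hy
    exact ss ht k y (T y) (by rw [hT]; abel) hy
  have htop := Submodule.eq_top_of_disjoint _ _ (LinearMap.finrank_range_add_finrank_ker T).ge hd
  have hx : x ∈ LinearMap.range T ⊔ LinearMap.ker T := htop ▸ Submodule.mem_top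
  obtain ⟨_, ⟨w, rfl⟩, v, hv, rfl⟩ := Submodule.mem_sup.1 hx
  rw [LinearMap.mem_ker, hT, sub_eq_zero] at hv
  exact ⟨v, w, hv, by rw [hT]; abel⟩

/-- lower part of the grading -/
def lower (h : L) (n : ℤ) : Submodule ℂ L :=
  ⨆ i : ℤ, ⨆ _ : i ≤ -n, Module.End.eigenspace (LieAlgebra.ad ℂ L h) (i : ℂ)

lemma lower_induction {h : L} {n : ℤ} (S : Submodule ℂ L)
    (hS : ∀ i : ℤ, i ≤ -n → ∀ y, ⁅h, y⁆ = (i : ℂ) • y → y ∈ S) : lower h n ≤ S :=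
  iSup_le fun i ↦ iSup_le fun hi y hy ↦ hS i hi y (Module.End.mem_eigenspace_iff.1 hy)

lemma mem_lower {h : L} {n i : ℤ} (hi : i ≤ -n) {y : L} (hy : ⁅h, y⁆ = (i : ℂ) • y) :
    y ∈ lower h n :=
  Submodule.mem_iSup_of_mem i (Submodule.mem_iSup_of_mem hi (Module.End.mem_eigenspace_iff.2 hy))

lemma killing_inv (a b c : L) : killingForm ℂ L ⁅a, b⁆ c = killingForm ℂ L a ⁅b, c⁆ :=
  LieModule.traceForm_apply_lie_apply ℂ L L a b c

lemma lower_step [LieAlgebra.IsKilling ℂ L] (ht : IsSl2Triple h e f) (x : L)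
    (hx : ∀ y ∈ lower h 2, killingForm ℂ L (x - e) y = 0) (y : L) (hxy : ⁅x, y⁆ = 0)
    (n : ℕ) (hn : 1 ≤ n) (hy : y ∈ lower h n) : y ∈ lower h (n + 1 : ℕ) := by
  have hsplit : lower h n ≤
      Module.End.eigenspace (LieAlgebra.ad ℂ L h) ((-n : ℤ) : ℂ) ⊔ lower h (n + 1 : ℕ) := by
    refine lower_induction _ fun i hi z hz ↦ ?_
    rcases hi.eq_or_lt with rfl | hlt
    · exact Submodule.mem_sup_left (Module.End.mem_eigenspace_iff.2 hz)
    · exact Submodule.mem_sup_right (mem_lower (by push_cast; omega) hz)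
  obtain ⟨y0, hy0, y', hy', hyy⟩ := Submodule.mem_sup.1 (hsplit hy)
  replace hy0 : ⁅h, y0⁆ = ((-n : ℤ) : ℂ) • y0 := Module.End.mem_eigenspace_iff.1 hy0
  push_cast at hy0
  suffices y0 = 0 by rw [← hyy, this, zero_add]; exact hy'
  have A (v : L) (hv : ⁅h, v⁆ = (n : ℂ) • v) : killingForm ℂ L y v = 0 := by
    obtain ⟨w, hw, rfl⟩ := e_surj ht n hn v hv
    have h1 : ⁅y, w⁆ ∈ lower h 2 := by
      have : lower h n ≤ (lower h 2).comap (LieAlgebra.ad ℂ L w) := by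
        refine lower_induction _ fun i hi z hz ↦ ?_
        change ⁅w, z⁆ ∈ lower h 2
        refine mem_lower (i := i + n - 2) (by omega) ?_
        rw [leibniz_lie h, hw, hz]
        simp only [lie_smul, smul_lie]
        push_cast
        module
      have := this hy
      rw [← lie_skew]
      exact neg_mem this
    have h2 := hx _ h1
    rw [← killing_inv, sub_lie, hxy, zero_sub, ← lie_skew e y, neg_neg, killing_inv] at h2
    exact h2
  have B (v : L) (hv : ⁅h, v⁆ = (n : ℂ) • v) : killingForm ℂ L y0 v = 0 := by
    have h1 : killingForm ℂ L y' v = 0 := by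
      have : lower h (n + 1 : ℕ) ≤ LinearMap.ker ((killingForm ℂ L).flip v) := by
        refine lower_induction _ fun i hi z hz ↦ ?_
        rw [LinearMap.mem_ker]
        change killingForm ℂ L z v = 0
        have h3 := killing_inv z h v
        rw [← lie_skew, hz, hv] at h3
        simp only [map_neg, map_smul, LinearMap.neg_apply, LinearMap.smul_apply, smul_eq_mul] at h3
        have h4 : ((i + n : ℤ) : ℂ) * killingForm ℂ L z v = 0 := by
          push_cast
          linear_combination -h3
        refine (mul_eq_zero.1 h4).resolve_left ?_
        rw [Int.cast_eq_zero]
        push_cast at hi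
        omega
      exact this hy'
    have h2 := A v hv
    rw [← hyy, map_add, LinearMap.add_apply, h1, add_zero] at h2
    exact h2
  have C (a : L) : killingForm ℂ L y0 a = 0 := by
    obtain ⟨v, w, hv, rfl⟩ := decomp ht n a
    rw [map_add, B v hv, map_sub, ← killing_inv, ← lie_skew, hy0]
    simp
  have hker := LieAlgebra.IsKilling.ker_killingForm_eq_bot ℂ L
  have : y0 ∈ LinearMap.ker (killingForm ℂ L) := LinearMap.ext C
  rwa [hker] at this

lemma main_inj [LieAlgebra.IsKilling ℂ L] (ht : IsSl2Triple h e f) (x : L)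
    (hx : ∀ y ∈ lower h 2, killingForm ℂ L (x - e) y = 0) (y : L) (hxy : ⁅x, y⁆ = 0)
    (hy : y ∈ lower h 1) : y = 0 := by
  have H (n : ℕ) : y ∈ lower h (n + 1 : ℕ) := by
    induction n with
    | zero => simpa using hy
    | succ n ih => exact lower_step ht x hx y hxy (n + 1) (by omega) ih
  obtain ⟨K, hK⟩ := exists_bound h
  have : lower h (K + 1 : ℕ) ≤ ⊥ := by
    refine lower_induction _ fun i hi z hz ↦ ?_
    obtain ⟨j, rfl⟩ : ∃ j : ℕ, i = -j := ⟨i.natAbs, by omega⟩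
    refine hK j (by push_cast at hi; omega) (-1) (Or.inr rfl) z ?_
    rw [hz]
    push_cast
    simp
  simpa using this (H K)

end Stmt5Aux

/-- Let `g` be a complex semisimple Lie algebra with `sl₂`-triple
`(e, h, f)` and `m = ℓ ⊕ (⊕_{i ≤ -2} g(i))` as above.  For every `x` in the affine
subspace `e + m^⊥` (the Killing-orthogonal complement of `m`), the linear map
`g → m*`, `a ↦ κ(⁅a, x⁆, ·)|_m`, is surjective; i.e. every adjoint orbit meets
`e + m^⊥` transversely. -/
theorem stmt5 (L : Type*) [LieRing L] [LieAlgebra ℂ L] [Module.Finite ℂ L]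
    [LieAlgebra.IsSemisimple ℂ L] (h e f : L) (ht : IsSl2Triple h e f)
    (ℓ : Submodule ℂ L)
    (hℓsub : ℓ ≤ Module.End.eigenspace (LieAlgebra.ad ℂ L h) (-1 : ℂ))
    (hℓiso : ∀ x ∈ ℓ, ∀ y ∈ ℓ, killingForm ℂ L e ⁅x, y⁆ = 0)
    (hℓmax : ∀ x ∈ Module.End.eigenspace (LieAlgebra.ad ℂ L h) (-1 : ℂ),
      (∀ y ∈ ℓ, killingForm ℂ L e ⁅x, y⁆ = 0) → x ∈ ℓ)
    (m : Submodule ℂ L)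
    (hm : m = ℓ ⊔ ⨆ i : ℤ, ⨆ _ : i ≤ -2,
      Module.End.eigenspace (LieAlgebra.ad ℂ L h) (i : ℂ))
    (x : L) (hx : ∀ y ∈ m, killingForm ℂ L (x - e) y = 0) :
    Function.Surjective (fun a : L => (killingForm ℂ L ⁅a, x⁆).domRestrict m) := by
  have : LieAlgebra.IsKilling ℂ L := inferInstance
  let B : L →ₗ[ℂ] m →ₗ[ℂ] ℂ :=
    ((killingForm ℂ L).compl₁₂ (-(LieAlgebra.ad ℂ L x : L →ₗ[ℂ] L)) m.subtype)
  have hB : (fun a : L => (killingForm ℂ L ⁅a, x⁆).domRestrict m) = B := by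
    funext a
    ext y
    change killingForm ℂ L ⁅a, x⁆ y = killingForm ℂ L (-⁅x, a⁆) y
    rw [lie_skew]
  rw [hB, ← LinearMap.flip_injective_iff₁, injective_iff_map_eq_zero]
  rintro ⟨y, hy⟩ h0
  have h2 : Stmt5Aux.lower h 2 ≤ m := by
    rw [hm]
    exact le_sup_right
  have h1 : m ≤ Stmt5Aux.lower h 1 := by
    rw [hm]
    refine sup_le (fun z hz ↦ ?_) (Stmt5Aux.lower_induction (n := 2) _ fun i hi z hz ↦
      Stmt5Aux.mem_lower (by omega) hz)
    refine Stmt5Aux.mem_lower (i := -1) le_rfl ?_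
    have := Module.End.mem_eigenspace_iff.1 (hℓsub hz)
    push_cast
    exact this
  have hxy : ⁅x, y⁆ = 0 := by
    have h3 (a : L) : killingForm ℂ L ⁅x, y⁆ a = 0 := by
      have h4 := LinearMap.congr_fun h0 a
      have h5 : B a ⟨y, hy⟩ = killingForm ℂ L ⁅a, x⁆ y := by
        rw [← hB]; rfl
      rw [LinearMap.flip_apply, h5, Stmt5Aux.killing_inv] at h4
      rw [LieModule.traceForm_comm]
      exact h4
    have hker := LieAlgebra.IsKilling.ker_killingForm_eq_bot ℂ L
    have h6 : ⁅x, y⁆ ∈ LinearMap.ker (killingForm ℂ L) := LinearMap.ext h3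
    rwa [hker] at h6
  exact Subtype.ext (Stmt5Aux.main_inj ht x (fun z hz ↦ hx z (h2 hz)) y hxy (h1 hy))
end
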